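/- arXiv:2103.14789 — 3 statements merged into one kernel-verified Lean document; each statement's English description precedes it below -/
import Mathlib

section
/- Let N be a positive integer and let A be a real symmetric N×N matrix with eigenvalues λ_1² < λ_2² < ... < λ_N², where 0 < λ_1 < ... < λ_N, and with an orthonormal basis of eigenvectors ψ_j satisfying A ψ_j = λ_j² ψ_j. Let ω > 0 be such that δ_h := min_j |λ_j − ω| / ω > 0. Let Δt > 0 satisfy T := 2π/ω = M Δt for a positive integer M, together with Δt ≤ 2/(λ_N + 2ω/π) and ω Δt ≤ min(δ_h, 1). Set ω̃ := sin(ω Δt/2)/(Δt/2) and let f ∈ ℝ^N. Let ν^∞ ∈ ℝ^N be a solution of (ω̃² I − A) ν^∞ = ω f. For initial data ν ∈ ℝ^N define the leapfrog sequence u^0 = ν, u^1 = ν − (Δt²/2)(A ν + ω f), and u^{n+1} = 2u^n − u^{n−1} − Δt² A u^n − Δt² ω cos(ω n Δt) f for n ≥ 1, and define the discrete filter Π_h ν := (2Δt/T) Σ_{n=0}^{M} η_n (cos(ω n Δt) − 1/4) u^n, where η_0 = η_M = 1/2 and η_n = 1 otherwise. Then the iteration ν^{(k+1)} = Π_h ν^{(k)}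 with ν^{(0)} = 0 converges to ν^∞; more precisely, with ρ_h := max(1 − 0.3 δ_h², 0.63) one has ‖ν^{(k)} − ν^∞‖ ≤ ρ_h^k ‖ν^∞‖ for all k ≥ 0, so ν^{(k)} → ν^∞ as k → ∞. -/
open Real Filter Finset

/-!
The time-harmonic sequence `cos (ω n Δt) ν^∞` is itself a leapfrog solution, and the filter returns
`ν^∞` from it; the error of one filter step is therefore the filtered *unforced* leapfrog solution
started at `ν - ν^∞`. On an eigenvector for `λ²` the unforced solution is `cos (2 n x)` times its
initial value, where `sin x = λ Δt / 2`, so the filter acts on that mode as a scalar `β`. Summing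
the trapezoidal rule with `a = ω Δt / 2 = π / M` gives
`β = sin (2 M x) / M * (cot (x + a) / 2 + cot (x - a) / 2 - cot x / 4)`.
Away from `x = a` one has `|β| ≤ 0.63`. Near `x = a` the singular term
`sin (2 M x) * cot (x - a) / (2 M)` behaves like `cos (M (x - a)) ≤ 1 - 2 ((x - a) / a)²`, and the
remaining terms are quadratically small because `ω Δt ≤ δ_h`.
-/

section Trigonometry

theorem strictAntiOn_cot_Ioo : StrictAntiOn cot (Set.Ioo 0 π) := by
  rintro s ⟨hs₀, hsπ⟩ t ⟨ht₀, htπ⟩ hst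
  have hsin : 0 < sin (t - s) := sin_pos_of_pos_of_lt_pi (by linarith) (by linarith)
  rw [sin_sub] at hsin
  rw [cot_eq_cos_div_sin, cot_eq_cos_div_sin, div_lt_div_iff₀
    (sin_pos_of_pos_of_lt_pi ht₀ htπ) (sin_pos_of_pos_of_lt_pi hs₀ hsπ)]
  linarith

theorem cot_nonneg_of_pos_of_le_pi_div_two {x : ℝ} (hx : 0 < x) (hx' : x ≤ π / 2) :
    0 ≤ cot x := by
  rw [cot_eq_cos_div_sin]
  exact div_nonneg (cos_nonneg_of_mem_Icc ⟨by linarith, hx'⟩)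
    (sin_nonneg_of_nonneg_of_le_pi hx.le (by linarith))

theorem cot_le_inv_of_pos_of_lt_pi_div_two {x : ℝ} (hx : 0 < x) (hx' : x < π / 2) :
    cot x ≤ x⁻¹ := by
  rw [← tan_inv_eq_cot]
  exact inv_anti₀ hx (lt_tan hx hx').le

theorem cot_three_mul_pi_div_four : cot (3 * π / 4) = -1 := by
  rw [cot_eq_cos_div_sin, show 3 * π / 4 = π - π / 4 by ring, cos_pi_sub, sin_pi_sub,
    cos_pi_div_four, sin_pi_div_four, neg_div, div_self (by positivity)]

theorem cot_sub_cot {x y : ℝ} (hx : sin x ≠ 0) (hy : sin y ≠ 0) :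
    cot x - cot y = sin (y - x) / (sin x * sin y) := by
  rw [cot_eq_cos_div_sin, cot_eq_cos_div_sin, div_sub_div _ _ hx hy, sin_sub]
  ring

theorem mul_one_sub_sq_div_six_le_sin {x c : ℝ} (hx : 0 ≤ x) (hxc : x ≤ c) :
    x * (1 - c ^ 2 / 6) ≤ sin x := by
  have hsq : x * x ^ 2 ≤ x * c ^ 2 := by gcongr
  linarith [sin_ge_sub_cube hx]

theorem sin_sub_mul_sin_add (x y : ℝ) :
    sin (x - y) * sin (x + y) = sin x ^ 2 - sin y ^ 2 := by
  rw [sin_sub, sin_add]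
  linear_combination sin x ^ 2 * sin_sq_add_cos_sq y - sin y ^ 2 * sin_sq_add_cos_sq x

theorem cos_natCast_add_two_mul (n : ℕ) (θ : ℝ) :
    cos ((n + 2 : ℕ) * θ) = 2 * cos θ * cos ((n + 1 : ℕ) * θ) - cos (n * θ) := by
  rw [show ((n + 2 : ℕ) : ℝ) * θ = (n + 1 : ℕ) * θ + θ by push_cast; ring,
    show (n : ℝ) * θ = (n + 1 : ℕ) * θ - θ by push_cast; ring, cos_add, cos_sub]
  ring

theorem sin_two_mul_div_mul_cot_mem_Icc_of_pos {m y : ℝ} (hm : 0 < m) (hy : 0 < y)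
    (hy' : y < π / 2) (hmy : m * y ≤ π / 2) :
    sin (2 * m * y) / m * (1 / 2 * cot y) ∈ Set.Icc 0 (cos (m * y)) := by
  have hmy₀ : 0 < m * y := by positivity
  have hcos : 0 ≤ cos (m * y) := cos_nonneg_of_mem_Icc ⟨by linarith, hmy⟩
  have hsin : 0 ≤ sin (m * y) := sin_nonneg_of_nonneg_of_le_pi hmy₀.le (by linarith)
  have hcot := cot_nonneg_of_pos_of_le_pi_div_two hy hy'.le
  rw [mul_assoc 2 m y, sin_two_mul]
  refine ⟨by positivity, ?_⟩
  calc 2 * sin (m * y) * cos (m * y) / m * (1 / 2 * cot y)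
      ≤ 2 * sin (m * y) * cos (m * y) / m * (1 / 2 * y⁻¹) := by
        gcongr
        exact cot_le_inv_of_pos_of_lt_pi_div_two hy hy'
    _ = cos (m * y) * (sin (m * y) / (m * y)) := by field_simp
    _ ≤ cos (m * y) := mul_le_of_le_one_right hcos (div_le_one_of_le₀ (sin_le hmy₀.le) hmy₀.le)

theorem sin_two_mul_div_mul_cot_mem_Icc {m y : ℝ} (hm : 0 < m) (hy : y ≠ 0)
    (hy' : |y| < π / 2) (hmy : m * |y| ≤ π / 2) :
    sin (2 * m * y) / m * (1 / 2 * cot y) ∈ Set.Icc 0 (cos (m * y)) := by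
  have h := sin_two_mul_div_mul_cot_mem_Icc_of_pos hm (abs_pos.2 hy) hy' hmy
  rcases abs_choice y with habs | habs <;> rw [habs] at h
  · exact h
  · simpa [cot_eq_cos_div_sin, neg_div, div_neg] using h

end Trigonometry

section TrapezoidalRule

/-- The weights `η_n` of the composite trapezoidal rule with nodes `0, …, M`. -/
noncomputable def trapezoidWeight (M n : ℕ) : ℝ := if n = 0 ∨ n = M then 1 / 2 else 1

theorem sum_trapezoidWeight_mul {M : ℕ} (hM : M ≠ 0) (g : ℕ → ℝ) :
    ∑ n ∈ range (M + 1), trapezoidWeight M n * g n = ∑ n ∈ range M, (g n + g (n + 1)) / 2 := by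
  obtain ⟨K, rfl⟩ := Nat.exists_eq_succ_of_ne_zero hM
  have hinterior : ∑ n ∈ range K, trapezoidWeight (K + 1) (n + 1) * g (n + 1)
      = ∑ n ∈ range K, g (n + 1) := by
    refine sum_congr rfl fun n hn => ?_
    have hne : ¬(n + 1 = 0 ∨ n + 1 = K + 1) := by grind
    rw [trapezoidWeight, if_neg hne, one_mul]
  rw [sum_range_succ, sum_range_succ', hinterior, ← sum_div, sum_add_distrib,
    sum_range_succ' g K, sum_range_succ (fun n => g (n + 1)) K]
  simp only [trapezoidWeight, true_or, or_true, if_true]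
  ring

/-- The trapezoidal sum of `cos (2 n p)` over `n = 0, …, M`. -/
noncomputable def trapezoidCosSum (M : ℕ) (p : ℝ) : ℝ :=
  ∑ n ∈ range (M + 1), trapezoidWeight M n * cos (n * (2 * p))

theorem trapezoidCosSum_zero {M : ℕ} (hM : M ≠ 0) : trapezoidCosSum M 0 = M := by
  rw [trapezoidCosSum, sum_trapezoidWeight_mul hM (fun n => cos (n * (2 * 0)))]
  simp

theorem trapezoidCosSum_eq {M : ℕ} {p : ℝ} (hM : M ≠ 0) (hp : sin p ≠ 0) :
    trapezoidCosSum M p = sin (2 * M * p) / 2 * cot p := by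
  have hmidpoint : ∀ n : ℕ, (cos (n * (2 * p)) + cos ((n + 1 : ℕ) * (2 * p))) / 2
      = cos (2 * p * n + p) * cos p := by
    intro n
    rw [show (n : ℝ) * (2 * p) = 2 * p * n + p - p by ring,
      show ((n + 1 : ℕ) : ℝ) * (2 * p) = 2 * p * n + p + p by push_cast; ring,
      cos_sub (2 * p * n + p) p, cos_add (2 * p * n + p) p]
    ring
  have hsum : sin p * ∑ n ∈ range M, cos (2 * p * n + p) = sin (2 * M * p) / 2 := by
    have h := sin_mul_sum_cos M (2 * p) p
    rw [show 2 * p / 2 = p by ring, show (M : ℝ) * (2 * p) / 2 = M * p by ring,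
      show (M - 1 : ℝ) * (2 * p) / 2 + p = M * p by ring] at h
    rw [h, mul_assoc 2, sin_two_mul]
    ring
  rw [trapezoidCosSum, sum_trapezoidWeight_mul hM (fun n => cos (n * (2 * p))),
    sum_congr rfl fun n _ => hmidpoint n, ← sum_mul, ← hsum, cot_eq_cos_div_sin]
  field_simp

theorem trapezoidCosSum_eq_zero {M : ℕ} {p : ℝ} (hM : M ≠ 0) (hp : sin p ≠ 0)
    (hMp : sin (2 * M * p) = 0) : trapezoidCosSum M p = 0 := by
  rw [trapezoidCosSum_eq hM hp, hMp, zero_div, zero_mul]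

end TrapezoidalRule

section FilterSymbol

/-- The factor `β` by which the discrete filter with `M` steps multiplies the mode `cos (2 n x)`.
The half-angles `a = ω Δt / 2` and `x` (with `sin x = λ Δt / 2`) are used throughout. -/
noncomputable def filterSymbol (M : ℕ) (a x : ℝ) : ℝ :=
  2 / M * ∑ n ∈ range (M + 1),
    trapezoidWeight M n * (cos (n * (2 * a)) - 1 / 4) * cos (n * (2 * x))

/-- The non-oscillating factor of `filterSymbol M a x`, obtained by summing the trapezoidal rule
in closed form. -/
noncomputable def filterKernel (a x : ℝ) : ℝ :=
  1 / 2 * cot (x + a) + 1 / 2 * cot (x - a) - 1 / 4 * cot x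

theorem filterSymbol_eq_trapezoidCosSum (M : ℕ) (a x : ℝ) :
    filterSymbol M a x = 2 / M * (1 / 2 * trapezoidCosSum M (x + a)
      + 1 / 2 * trapezoidCosSum M (x - a) - 1 / 4 * trapezoidCosSum M x) := by
  simp only [filterSymbol, trapezoidCosSum, mul_sum, ← sum_add_distrib, ← sum_sub_distrib]
  refine sum_congr rfl fun n _ => ?_
  rw [show (n : ℝ) * (2 * (x + a)) = n * (2 * x) + n * (2 * a) by ring,
    show (n : ℝ) * (2 * (x - a)) = n * (2 * x) - n * (2 * a) by ring, cos_add, cos_sub]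
  ring

theorem ne_zero_of_natCast_mul_eq_pi {M : ℕ} {a : ℝ} (hMa : M * a = π) : M ≠ 0 := by
  rintro rfl
  exact pi_ne_zero (by simpa using hMa.symm)

theorem pos_of_natCast_mul_eq_pi {M : ℕ} {a : ℝ} (hMa : M * a = π) : 0 < a :=
  pos_of_mul_pos_right (hMa ▸ pi_pos) M.cast_nonneg

variable {M : ℕ} {m a x δ : ℝ}

theorem filterSymbol_self (hMa : M * a = π) (ha : a < π / 2) : filterSymbol M a a = 1 := by
  have hM := ne_zero_of_natCast_mul_eq_pi hMa
  have ha₀ := pos_of_natCast_mul_eq_pi hMa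
  have hone : trapezoidCosSum M a = 0 :=
    trapezoidCosSum_eq_zero hM (sin_pos_of_pos_of_lt_pi ha₀ (by linarith)).ne'
      (by rw [mul_assoc, hMa, sin_two_pi])
  have htwo : trapezoidCosSum M (a + a) = 0 :=
    trapezoidCosSum_eq_zero hM (sin_pos_of_pos_of_lt_pi (by linarith) (by linarith)).ne'
      (by rw [show 2 * (M : ℝ) * (a + a) = 2 * (2 * (M * a)) by ring, hMa, sin_two_mul, sin_two_pi,
        mul_zero, zero_mul])
  rw [filterSymbol_eq_trapezoidCosSum, hone, htwo, sub_self, trapezoidCosSum_zero hM]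
  field_simp
  ring

theorem filterSymbol_zero (hMa : M * a = π) (ha : a < π) : filterSymbol M a 0 = -(1 / 2) := by
  have hM := ne_zero_of_natCast_mul_eq_pi hMa
  have hsin : sin a ≠ 0 := (sin_pos_of_pos_of_lt_pi (pos_of_natCast_mul_eq_pi hMa) ha).ne'
  have hsum : trapezoidCosSum M a = 0 :=
    trapezoidCosSum_eq_zero hM hsin (by rw [mul_assoc, hMa, sin_two_pi])
  have hsum_neg : trapezoidCosSum M (-a) = 0 :=
    trapezoidCosSum_eq_zero hM (by rwa [sin_neg, neg_ne_zero])
      (by rw [mul_neg, sin_neg, mul_assoc, hMa, sin_two_pi, neg_zero])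
  rw [filterSymbol_eq_trapezoidCosSum, zero_add, zero_sub, hsum, hsum_neg,
    trapezoidCosSum_zero hM]
  field_simp
  ring

theorem filterSymbol_eq_mul_filterKernel (hMa : M * a = π) (hadd : sin (x + a) ≠ 0)
    (hsub : sin (x - a) ≠ 0) (hx : sin x ≠ 0) :
    filterSymbol M a x = sin (2 * M * x) / M * filterKernel a x := by
  have hM := ne_zero_of_natCast_mul_eq_pi hMa
  rw [filterSymbol_eq_trapezoidCosSum, trapezoidCosSum_eq hM hadd, trapezoidCosSum_eq hM hsub,
    trapezoidCosSum_eq hM hx,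
    show 2 * (M : ℝ) * (x + a) = 2 * M * x + 2 * π by rw [← hMa]; ring, sin_add_two_pi,
    show 2 * (M : ℝ) * (x - a) = 2 * M * x - 2 * π by rw [← hMa]; ring, sin_sub_two_pi,
    filterKernel]
  field_simp

theorem abs_filterKernel_le_of_far (hma : m * a = π) (ha : 0 < a) (ha' : a ≤ 1 / 2)
    (hx : 3 * a / 2 ≤ x) (hx' : x ≤ π / 2) : |filterKernel a x| ≤ 0.63 * m := by
  have hπ := pi_gt_d2
  have hcot := strictAntiOn_cot_Ioo.antitoneOn
  have hm : 1 ≤ m := by nlinarith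
  have hsub : cot (x - a) ≤ 0.64 * m :=
    calc cot (x - a) ≤ (x - a)⁻¹ :=
          cot_le_inv_of_pos_of_lt_pi_div_two (by linarith) (by linarith)
      _ ≤ (a / 2)⁻¹ := inv_anti₀ (by positivity) (by linarith)
      _ ≤ 0.64 * m := by
        rw [inv_le_iff_one_le_mul₀ (by positivity)]
        linarith
  have hsub_le : cot x ≤ cot (x - a) :=
    hcot ⟨by linarith, by linarith⟩ ⟨by linarith, by linarith⟩ (by linarith)
  have hadd_le : cot (x + a) ≤ cot x :=
    hcot ⟨by linarith, by linarith⟩ ⟨by linarith, by linarith⟩ (by linarith)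
  have hadd : -1 ≤ cot (x + a) := cot_three_mul_pi_div_four ▸
    hcot ⟨by linarith, by linarith⟩ ⟨by linarith, by linarith⟩ (by linarith)
  have hx₀ : 0 ≤ cot x := cot_nonneg_of_pos_of_le_pi_div_two (by linarith) hx'
  rw [filterKernel, abs_le]
  constructor <;> linarith

theorem abs_sin_div_mul_filterKernel_le_of_far (hma : m * a = π) (ha : 0 < a) (ha' : a ≤ 1 / 2)
    (hx : 3 * a / 2 ≤ x) (hx' : x ≤ π / 2) :
    |sin (2 * m * x) / m * filterKernel a x| ≤ 0.63 := by
  have hm : 0 < m := pos_of_mul_pos_left (hma ▸ pi_pos) ha.le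
  rw [abs_mul, abs_div, abs_of_pos hm, div_mul_eq_mul_div, div_le_iff₀ hm]
  exact (mul_le_of_le_one_left (abs_nonneg _) (abs_sin_le_one _)).trans
    (abs_filterKernel_le_of_far hma ha ha' hx hx')

theorem neg_filterKernel_mem_Icc_of_low (ha : 0 < a) (ha' : a ≤ 1 / 2) (hx : 0 < x)
    (hxa : x ≤ a / 2) : -filterKernel a x ∈ Set.Icc 0 (1 / (4 * x) + 3 * x / (2 * a ^ 2)) := by
  have hπ := pi_gt_d2
  have hsub : 0 < sin (a - x) := sin_pos_of_pos_of_lt_pi (by linarith) (by linarith)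
  have hadd : 0 < sin (a + x) := sin_pos_of_pos_of_lt_pi (by linarith) (by linarith)
  have hprod : 2 / 3 * a ^ 2 ≤ sin (a - x) * sin (a + x) := by
    have hsin_a : a * (1 - (1 / 2) ^ 2 / 6) ≤ sin a := mul_one_sub_sq_div_six_le_sin ha.le ha'
    have hsin_x : sin x ^ 2 ≤ (a / 2) ^ 2 :=
      pow_le_pow_left₀ (sin_nonneg_of_nonneg_of_le_pi hx.le (by linarith))
        ((sin_le hx.le).trans hxa) 2
    rw [sin_sub_mul_sin_add]
    nlinarith
  have hdiff : cot (a - x) - cot (a + x) ≤ 2 * x / (2 / 3 * a ^ 2) := by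
    rw [cot_sub_cot hsub.ne' hadd.ne', show a + x - (a - x) = 2 * x by ring]
    exact div_le_div₀ (by linarith) (sin_le (by linarith)) (by positivity) hprod
  have hdiff₀ : cot (a + x) ≤ cot (a - x) := strictAntiOn_cot_Ioo.antitoneOn
    ⟨by linarith, by linarith⟩ ⟨by linarith, by linarith⟩ (by linarith)
  have hcot := cot_le_inv_of_pos_of_lt_pi_div_two hx (by linarith)
  have hcot₀ := cot_nonneg_of_pos_of_le_pi_div_two hx (by linarith)
  have hneg : -filterKernel a x = 1 / 4 * cot x + 1 / 2 * (cot (a - x) - cot (a + x)) := by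
    rw [filterKernel, add_comm x a, ← neg_sub a x, cot_eq_cos_div_sin (-(a - x)), cos_neg, sin_neg,
      div_neg, ← cot_eq_cos_div_sin]
    ring
  rw [hneg]
  refine ⟨by linarith, ?_⟩
  calc 1 / 4 * cot x + 1 / 2 * (cot (a - x) - cot (a + x))
      ≤ 1 / 4 * x⁻¹ + 1 / 2 * (2 * x / (2 / 3 * a ^ 2)) := by gcongr
    _ = 1 / (4 * x) + 3 * x / (2 * a ^ 2) := by field_simp

theorem abs_sin_div_mul_filterKernel_le_of_low (hma : m * a = π) (ha : 0 < a) (ha' : a ≤ 1 / 2)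
    (hx : 0 < x) (hxa : x ≤ a / 2) :
    |sin (2 * m * x) / m * filterKernel a x| ≤ 0.63 := by
  have hπ := pi_gt_d2
  have hm : 0 < m := pos_of_mul_pos_left (hma ▸ pi_pos) ha.le
  obtain ⟨hK₀, hK⟩ := neg_filterKernel_mem_Icc_of_low ha ha' hx hxa
  obtain ⟨r, rfl⟩ : ∃ r, x = r * a := ⟨x / a, by field_simp⟩
  have hr₀ : 0 < r := pos_of_mul_pos_left hx ha.le
  have hr : r ≤ 1 / 2 := le_of_mul_le_mul_right (by linarith) ha
  have hangle : 2 * m * (r * a) = 2 * π * r := by rw [← hma]; ring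
  have hS₀ : 0 ≤ sin (2 * π * r) := sin_nonneg_of_nonneg_of_le_pi (by positivity) (by nlinarith)
  have hS₁ : sin (2 * π * r) ≤ 1 := sin_le_one _
  have hS₂ : sin (2 * π * r) ≤ 2 * π * r := sin_le (by positivity)
  rw [hangle, ← abs_neg, ← mul_neg, abs_of_nonneg (by positivity)]
  calc sin (2 * π * r) / m * -filterKernel a (r * a)
      ≤ sin (2 * π * r) / m * (1 / (4 * (r * a)) + 3 * (r * a) / (2 * a ^ 2)) := by gcongr
    _ = sin (2 * π * r) / (4 * π * r) + 3 * sin (2 * π * r) * r / (2 * π) := by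
        rw [← hma]
        field_simp
    _ ≤ 0.63 := by
        have hsecond : 3 * sin (2 * π * r) * r / (2 * π) ≤ 0.48 * r := by
          rw [div_le_iff₀ (by positivity)]
          nlinarith
        rcases le_total r (1 / 4) with hr' | hr'
        · have hfirst : sin (2 * π * r) / (4 * π * r) ≤ 1 / 2 := by
            rw [div_le_iff₀ (by positivity)]
            linarith
          linarith
        · have hfirst : sin (2 * π * r) / (4 * π * r) ≤ 0.32 := by
            rw [div_le_iff₀ (by positivity)]
            nlinarith
          linarith

/-- The part of `filterKernel a x` that stays regular at `x = a`. -/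
noncomputable def regularFilterKernel (a x : ℝ) : ℝ := 1 / 2 * cot (x + a) - 1 / 4 * cot x

theorem regularFilterKernel_eq_div (hadd : sin (x + a) ≠ 0) (hx : sin x ≠ 0) :
    regularFilterKernel a x = (sin (2 * x + a) - 3 * sin a) / (8 * (sin x * sin (x + a))) := by
  have hsum : sin (2 * x + a) = sin x * cos (x + a) + cos x * sin (x + a) := by
    rw [← sin_add]
    ring_nf
  have hdiff : sin a = sin (x + a) * cos x - cos (x + a) * sin x := by
    rw [← sin_sub]
    ring_nf
  rw [regularFilterKernel, hsum, hdiff, cot_eq_cos_div_sin, cot_eq_cos_div_sin]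
  field_simp
  ring

theorem sq_div_two_le_sin_mul_sin_add (ha : 0 < a) (ha' : a ≤ 1 / 2) (hx : a / 2 ≤ x)
    (hx' : x ≤ 3 * a / 2) : a ^ 2 / 2 ≤ sin x * sin (x + a) := by
  have hsin : a / 2 * (1 - (3 / 4) ^ 2 / 6) ≤ sin x :=
    (mul_le_mul_of_nonneg_right hx (by norm_num)).trans
      (mul_one_sub_sq_div_six_le_sin (by linarith) (by linarith))
  have hsin_add : 3 * a / 2 * (1 - (5 / 4) ^ 2 / 6) ≤ sin (x + a) :=
    (mul_le_mul_of_nonneg_right (by linarith) (by norm_num)).trans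
      (mul_one_sub_sq_div_six_le_sin (by linarith) (by linarith))
  calc a ^ 2 / 2
      ≤ a / 2 * (1 - (3 / 4) ^ 2 / 6) * (3 * a / 2 * (1 - (5 / 4) ^ 2 / 6)) := by
        linarith [sq_nonneg a]
    _ ≤ sin x * sin (x + a) := mul_le_mul hsin hsin_add (mul_nonneg (by positivity) (by norm_num))
        ((mul_nonneg (by positivity) (by norm_num)).trans hsin)

theorem abs_sin_two_mul_add_sub_three_mul_sin_le (ha : 0 ≤ a) (ha' : a ≤ π) :
    |sin (2 * x + a) - 3 * sin a| ≤ 4 * a ^ 3 + 2 * |x - a| := by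
  have hsin₀ : 0 ≤ sin a := sin_nonneg_of_nonneg_of_le_pi ha ha'
  calc |sin (2 * x + a) - 3 * sin a|
      = |sin (2 * x + a) - sin (3 * a) + -(4 * sin a ^ 3)| := by
        rw [sin_three_mul]
        ring_nf
    _ ≤ |sin (2 * x + a) - sin (3 * a)| + |-(4 * sin a ^ 3)| := abs_add_le _ _
    _ ≤ |2 * x + a - 3 * a| + 4 * a ^ 3 := by
        rw [abs_neg, abs_of_nonneg (by positivity : 0 ≤ 4 * sin a ^ 3)]
        refine add_le_add (abs_sin_sub_sin_le _ _) ?_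
        gcongr
        exact sin_le ha
    _ = 4 * a ^ 3 + 2 * |x - a| := by
        rw [show 2 * x + a - 3 * a = 2 * (x - a) by ring, abs_mul, abs_two, add_comm]

theorem abs_regularFilterKernel_le (ha : 0 < a) (ha' : a ≤ 1 / 2) (hx : a / 2 ≤ x)
    (hx' : x ≤ 3 * a / 2) :
    |regularFilterKernel a x| ≤ (2 * a ^ 3 + |x - a|) / (2 * a ^ 2) := by
  have hπ := pi_gt_d2
  have hsin : 0 < sin x := sin_pos_of_pos_of_lt_pi (by linarith) (by linarith)
  have hsin_add : 0 < sin (x + a) := sin_pos_of_pos_of_lt_pi (by linarith) (by linarith)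
  have hprod := sq_div_two_le_sin_mul_sin_add ha ha' hx hx'
  rw [regularFilterKernel_eq_div hsin_add.ne' hsin.ne', abs_div,
    abs_of_pos (by positivity : 0 < 8 * (sin x * sin (x + a)))]
  calc |sin (2 * x + a) - 3 * sin a| / (8 * (sin x * sin (x + a)))
      ≤ (4 * a ^ 3 + 2 * |x - a|) / (8 * (a ^ 2 / 2)) := by
        gcongr
        exact abs_sin_two_mul_add_sub_three_mul_sin_le ha.le (by linarith)
    _ = (2 * a ^ 3 + |x - a|) / (2 * a ^ 2) := by
        field_simp
        ring

theorem mul_le_abs_sub_div_of_le_abs_sin_sub_div (ha : 0 < a) (ha' : a ≤ 1 / 2) (hx : 0 ≤ x)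
    (hx' : x ≤ 3 * a / 2) (had : 2 * a ≤ δ) (hδ : δ ≤ |sin x - a| / a) :
    55 / 64 * δ ≤ |x - a| / a := by
  have hsin : |sin x - x| ≤ x ^ 3 / 6 := by
    rw [abs_le]
    constructor <;> linarith [sin_ge_sub_cube hx, sin_le hx, pow_nonneg hx 3]
  have hcube : x ^ 3 / 6 ≤ 9 / 64 * δ * a :=
    calc x ^ 3 / 6 ≤ (3 * a / 2) ^ 3 / 6 := by gcongr
      _ = 9 / 16 * (a * a) * a := by ring
      _ ≤ 9 / 16 * (1 / 2 * (δ / 2)) * a := by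
        gcongr
        linarith
      _ = 9 / 64 * δ * a := by ring
  rw [le_div_iff₀ ha] at hδ ⊢
  linarith [abs_sub_le (sin x) x a]

theorem cos_mul_le_one_sub_two_mul_sq {y : ℝ} (hma : m * a = π) (ha : 0 < a) (hy : |y| ≤ a) :
    cos (m * y) ≤ 1 - 2 * (|y| / a) ^ 2 := by
  have hangle : m * |y| = π * (|y| / a) := by
    rw [← hma]
    field_simp
  have hle : |y| / a ≤ 1 := (div_le_one₀ ha).2 hy
  have hm : 0 < m := pos_of_mul_pos_left (hma ▸ pi_pos) ha.le
  rw [← cos_abs, abs_mul, abs_of_pos hm, hangle]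
  calc cos (π * (|y| / a)) ≤ 1 - 2 / π ^ 2 * (π * (|y| / a)) ^ 2 :=
        cos_le_one_sub_mul_cos_sq
          (by rw [abs_of_nonneg (by positivity)]; exact mul_le_of_le_one_right pi_pos.le hle)
    _ = 1 - 2 * (|y| / a) ^ 2 := by field_simp

theorem abs_sin_div_mul_regularFilterKernel_le (hm : 0 < m) (ha : 0 < a) (ha' : a ≤ 1 / 2)
    (hx : a / 2 ≤ x) (hx' : x ≤ 3 * a / 2) :
    |sin (2 * m * (x - a)) / m * regularFilterKernel a x|
      ≤ |x - a| / a * (2 * a ^ 2 + |x - a| / a) := by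
  have hsin : |sin (2 * m * (x - a))| ≤ 2 * m * |x - a| := by
    simpa only [abs_mul, abs_two, abs_of_pos hm] using abs_sin_le_abs (x := 2 * m * (x - a))
  rw [abs_mul, abs_div, abs_of_pos hm]
  calc |sin (2 * m * (x - a))| / m * |regularFilterKernel a x|
      ≤ 2 * m * |x - a| / m * ((2 * a ^ 3 + |x - a|) / (2 * a ^ 2)) :=
        mul_le_mul (div_le_div_of_nonneg_right hsin hm.le)
          (abs_regularFilterKernel_le ha ha' hx hx') (abs_nonneg _) (by positivity)
    _ = |x - a| / a * (2 * a ^ 2 + |x - a| / a) := by field_simp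

theorem abs_sin_div_mul_filterKernel_le_of_near (hma : m * a = π) (ha : 0 < a)
    (ha' : a ≤ 1 / 2) (hx : a / 2 ≤ x) (hx' : x ≤ 3 * a / 2) (hxa : x ≠ a) (had : 2 * a ≤ δ)
    (hδ : 55 / 64 * δ ≤ |x - a| / a) :
    |sin (2 * m * x) / m * filterKernel a x| ≤ 1 - 0.3 * δ ^ 2 := by
  have hπ := pi_gt_d2
  have hm : 0 < m := pos_of_mul_pos_left (hma ▸ pi_pos) ha.le
  have hdist : |x - a| ≤ a / 2 := abs_le.2 ⟨by linarith, by linarith⟩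
  have hsplit : sin (2 * m * x) / m * filterKernel a x
      = sin (2 * m * (x - a)) / m * (1 / 2 * cot (x - a))
        + sin (2 * m * (x - a)) / m * regularFilterKernel a x := by
    rw [show 2 * m * x = 2 * m * (x - a) + 2 * π by rw [← hma]; ring, sin_add_two_pi, filterKernel,
      regularFilterKernel]
    ring
  obtain ⟨hsingular₀, hsingular⟩ := sin_two_mul_div_mul_cot_mem_Icc hm (sub_ne_zero.2 hxa)
    (by linarith) (by nlinarith)
  have hcos := cos_mul_le_one_sub_two_mul_sq hma ha (hdist.trans (by linarith))
  have hregular := abs_sin_div_mul_regularFilterKernel_le hm ha ha' hx hx'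
  have hs' : |x - a| / a ≤ 1 / 2 := (div_le_iff₀ ha).2 (by linarith)
  set s := |x - a| / a
  have hregular_le : s * (2 * a ^ 2 + s) ≤ 1.59 * s ^ 2 := by nlinarith
  have hδs : 0.3 * δ ^ 2 ≤ 0.41 * s ^ 2 := by nlinarith
  rw [hsplit]
  rw [abs_le] at hregular ⊢
  constructor <;> nlinarith

theorem abs_filterSymbol_le (hMa : M * a = π) (ha' : a ≤ 1 / 2) (hx : 0 ≤ x) (hx' : x ≤ π / 2)
    (had : 2 * a ≤ δ) (hδ : δ ≤ |sin x - a| / a) :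
    |filterSymbol M a x| ≤ max (1 - 0.3 * δ ^ 2) 0.63 := by
  have hπ := pi_gt_d2
  have ha := pos_of_natCast_mul_eq_pi hMa
  rcases hx.eq_or_lt with rfl | hx₀
  · rw [filterSymbol_zero hMa (by linarith)]
    exact le_max_of_le_right (by norm_num [abs_of_pos])
  have hgap : x ≤ 3 * a / 2 → 55 / 64 * δ ≤ |x - a| / a := fun h =>
    mul_le_abs_sub_div_of_le_abs_sin_sub_div ha ha' hx h had hδ
  have hxa : x ≠ a := by
    rintro rfl
    have := hgap (by linarith)
    rw [sub_self, abs_zero, zero_div] at this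
    linarith
  have hsin : sin x ≠ 0 := (sin_pos_of_pos_of_lt_pi hx₀ (by linarith)).ne'
  have hsin_add : sin (x + a) ≠ 0 := (sin_pos_of_pos_of_lt_pi (by linarith) (by linarith)).ne'
  have hsin_sub : sin (x - a) ≠ 0 := by
    rwa [Ne, sin_eq_zero_iff_of_lt_of_lt (by linarith) (by linarith), sub_eq_zero]
  rw [filterSymbol_eq_mul_filterKernel hMa hsin_add hsin_sub hsin]
  rcases le_total x (a / 2) with hlow | hlow
  · exact le_max_of_le_right (abs_sin_div_mul_filterKernel_le_of_low hMa ha ha' hx₀ hlow)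
  rcases le_total x (3 * a / 2) with hnear | hfar
  · exact le_max_of_le_left (abs_sin_div_mul_filterKernel_le_of_near hMa ha ha' hlow hnear hxa had
      (hgap hnear))
  · exact le_max_of_le_right (abs_sin_div_mul_filterKernel_le_of_far hMa ha ha' hfar hx')

end FilterSymbol

section Leapfrog

variable {E F : Type*} [AddCommGroup E] [Module ℝ E] [AddCommGroup F] [Module ℝ F]

/-- `u` is a leapfrog solution of `u'' = -A u - ω cos (ω t) f` with time step `Δt` and zero initial
velocity; its initial value `u 0` is left free. -/
structure IsLeapfrog (A : E →ₗ[ℝ] E) (ω Δt : ℝ) (f : E) (u : ℕ → E) : Prop where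
  one : u 1 = u 0 - (Δt ^ 2 / 2) • (A (u 0) + ω • f)
  add_two : ∀ n : ℕ, u (n + 2) = (2 : ℝ) • u (n + 1) - u n - Δt ^ 2 • A (u (n + 1))
    - (Δt ^ 2 * ω * cos (ω * (n + 1 : ℕ) * Δt)) • f

/-- The composite trapezoidal discretization, with `M` steps of length `Δt`, of
`(2 / T) ∫₀ᵀ (cos (ω t) - 1 / 4) u(t) dt` over one period `T = 2 π / ω`. -/
noncomputable def waveHoltzFilter (M : ℕ) (ω Δt : ℝ) (u : ℕ → E) : E :=
  (2 * Δt / (2 * π / ω)) • ∑ n ∈ range (M + 1),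
    (trapezoidWeight M n * (cos (ω * n * Δt) - 1 / 4)) • u n

variable {A : E →ₗ[ℝ] E} {M : ℕ} {ω Δt x μ : ℝ} {f g ν : E} {u v : ℕ → E}

theorem IsLeapfrog.sub (hu : IsLeapfrog A ω Δt f u) (hv : IsLeapfrog A ω Δt g v) :
    IsLeapfrog A ω Δt (f - g) (u - v) where
  one := by
    simp only [Pi.sub_apply, hu.one, hv.one, map_sub]
    module
  add_two n := by
    simp only [Pi.sub_apply, hu.add_two, hv.add_two, map_sub]
    module

theorem isLeapfrog_cos_smul (hΔt : Δt ≠ 0)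
    (hν : (sin (ω * Δt / 2) / (Δt / 2)) ^ 2 • ν - A ν = ω • f) :
    IsLeapfrog A ω Δt f (fun n => cos (ω * n * Δt) • ν) := by
  have hfreq : Δt ^ 2 * (sin (ω * Δt / 2) / (Δt / 2)) ^ 2 = 2 - 2 * cos (ω * Δt) := by
    rw [show ω * Δt = 2 * (ω * Δt / 2) by ring, cos_two_mul, cos_sq']
    field_simp
    ring
  have hforce : (Δt ^ 2 * ω) • f = (2 - 2 * cos (ω * Δt)) • ν - Δt ^ 2 • A ν := by
    rw [mul_smul, ← hν, ← hfreq]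
    module
  have hangle : ∀ n : ℕ, ω * n * Δt = n * (ω * Δt) := fun n => by ring
  constructor
  · simp only [Nat.cast_zero, Nat.cast_one, mul_zero, zero_mul, mul_one, cos_zero, one_smul]
    linear_combination (norm := module) (1 / 2 : ℝ) • hforce
  · intro n
    simp only [hangle, cos_natCast_add_two_mul, map_smul]
    linear_combination (norm := module) cos ((n + 1 : ℕ) * (ω * Δt)) • hforce

theorem IsLeapfrog.map_eq_cos_mul (hu : IsLeapfrog A ω Δt 0 u) {ℓ : E →ₗ[ℝ] ℝ}
    (hℓ : ∀ v, ℓ (A v) = μ * ℓ v) (hx : Δt ^ 2 * μ = 2 - 2 * cos x) (n : ℕ) :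
    ℓ (u n) = cos (n * x) * ℓ (u 0) := by
  induction n using Nat.twoStepInduction with
  | zero => simp
  | one =>
    rw [hu.one]
    simp only [map_sub, map_smul, map_add, hℓ, smul_zero, map_zero, smul_eq_mul, Nat.cast_one,
      one_mul]
    linear_combination -(1 / 2) * ℓ (u 0) * hx
  | more n ih₀ ih₁ =>
    rw [hu.add_two, cos_natCast_add_two_mul]
    simp only [map_sub, map_smul, hℓ, smul_zero, map_zero, smul_eq_mul]
    linear_combination 2 * cos x * ih₁ - ih₀ - ℓ (u (n + 1)) * hx

theorem waveHoltzFilter_sub (u v : ℕ → E) :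
    waveHoltzFilter M ω Δt (u - v) = waveHoltzFilter M ω Δt u - waveHoltzFilter M ω Δt v := by
  simp only [waveHoltzFilter, Pi.sub_apply, smul_sub, sum_sub_distrib]

theorem map_waveHoltzFilter (ℓ : E →ₗ[ℝ] F) (u : ℕ → E) :
    ℓ (waveHoltzFilter M ω Δt u) = waveHoltzFilter M ω Δt (fun n => ℓ (u n)) := by
  simp only [waveHoltzFilter, map_smul, map_sum]

theorem waveHoltzFilter_cos_smul (hΔt : Δt ≠ 0) (hT : 2 * π / ω = M * Δt) (v : E) :
    waveHoltzFilter M ω Δt (fun n => cos (n * (2 * x)) • v)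
      = filterSymbol M (ω * Δt / 2) x • v := by
  have hcoeff : 2 * Δt / (2 * π / ω) = 2 / M := by rw [hT, mul_div_mul_right _ _ hΔt]
  have hangle : ∀ n : ℕ, ω * n * Δt = n * (2 * (ω * Δt / 2)) := fun n => by ring
  simp only [waveHoltzFilter, filterSymbol, hcoeff, hangle, smul_smul, ← sum_smul]

theorem natCast_mul_half_angle_eq_pi (hω : ω ≠ 0) (hT : 2 * π / ω = M * Δt) :
    M * (ω * Δt / 2) = π := by
  rw [div_eq_iff hω] at hT
  linarith

theorem IsLeapfrog.map_waveHoltzFilter_sub (hω : 0 < ω) (hΔt : 0 < Δt) (hωΔt : ω * Δt ≤ 1)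
    (hT : 2 * π / ω = M * Δt)
    (hν : (sin (ω * Δt / 2) / (Δt / 2)) ^ 2 • ν - A ν = ω • f) (hu : IsLeapfrog A ω Δt f u)
    {ℓ : E →ₗ[ℝ] ℝ} (hℓ : ∀ v, ℓ (A v) = μ * ℓ v) (hx : Δt ^ 2 * μ = 2 - 2 * cos (2 * x)) :
    ℓ (waveHoltzFilter M ω Δt u - ν) = filterSymbol M (ω * Δt / 2) x * ℓ (u 0 - ν) := by
  have hMa := natCast_mul_half_angle_eq_pi hω.ne' hT
  set harmonic : ℕ → E := fun n => cos (ω * n * Δt) • ν with hharmonic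
  have hfixed : waveHoltzFilter M ω Δt harmonic = ν := by
    have hangle : ∀ n : ℕ, ω * n * Δt = n * (2 * (ω * Δt / 2)) := fun n => by ring
    simp only [hharmonic, hangle]
    rw [waveHoltzFilter_cos_smul hΔt.ne' hT, filterSymbol_self hMa (by linarith [pi_gt_d2]),
      one_smul]
  have herror : IsLeapfrog A ω Δt 0 (u - harmonic) :=
    sub_self f ▸ hu.sub (isLeapfrog_cos_smul hΔt.ne' hν)
  have hinit : (u - harmonic) 0 = u 0 - ν := by simp [hharmonic]
  calc ℓ (waveHoltzFilter M ω Δt u - ν)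
      = ℓ (waveHoltzFilter M ω Δt (u - harmonic)) := by rw [waveHoltzFilter_sub, hfixed]
    _ = waveHoltzFilter M ω Δt (fun n => cos (n * (2 * x)) • ℓ (u 0 - ν)) := by
        simp only [map_waveHoltzFilter, herror.map_eq_cos_mul hℓ hx, hinit, smul_eq_mul]
    _ = filterSymbol M (ω * Δt / 2) x * ℓ (u 0 - ν) := by
        rw [waveHoltzFilter_cos_smul hΔt.ne' hT, smul_eq_mul]

end Leapfrog

section Convergence

theorem norm_le_mul_norm_of_forall_norm_inner_le {ι 𝕜 E : Type*} [RCLike 𝕜]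
    [NormedAddCommGroup E] [InnerProductSpace 𝕜 E] (b : HilbertBasis ι 𝕜 E) {c : ℝ} (hc : 0 ≤ c)
    {v w : E} (h : ∀ i, ‖inner 𝕜 (b i) v‖ ≤ c * ‖inner 𝕜 (b i) w‖) : ‖v‖ ≤ c * ‖w‖ := by
  have hparseval : ∀ z : E, HasSum (fun i => ‖inner 𝕜 (b i) z‖ ^ 2) (‖z‖ ^ 2) := by
    intro z
    simpa [b.repr_apply_apply] using lp.hasSum_norm (p := 2) (by norm_num) (b.repr z)
  refine le_of_sq_le_sq ?_ (by positivity)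
  rw [mul_pow]
  refine hasSum_le (fun i => ?_) (hparseval v) ((hparseval w).mul_left (c ^ 2))
  rw [← mul_pow]
  exact pow_le_pow_left₀ (norm_nonneg _) (h i) 2

theorem norm_sub_le_and_tendsto_of_contraction {E : Type*} [SeminormedAddCommGroup E] {s : ℕ → E}
    {l : E} {c : ℝ} (hc₀ : 0 ≤ c) (hc₁ : c < 1)
    (hs : ∀ k, ‖s (k + 1) - l‖ ≤ c * ‖s k - l‖) :
    (∀ k, ‖s k - l‖ ≤ c ^ k * ‖s 0 - l‖) ∧ Tendsto s atTop (nhds l) := by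
  have hbound : ∀ k, ‖s k - l‖ ≤ c ^ k * ‖s 0 - l‖ := fun k =>
    le_geom (u := fun k => ‖s k - l‖) hc₀ k fun j _ => hs j
  refine ⟨hbound, tendsto_iff_norm_sub_tendsto_zero.2 ?_⟩
  refine squeeze_zero (fun _ => norm_nonneg _) hbound ?_
  simpa using (tendsto_pow_atTop_nhds_zero_of_lt_one hc₀ hc₁).mul_const ‖s 0 - l‖

theorem IsLeapfrog.norm_waveHoltzFilter_sub_le {ι E : Type*} [NormedAddCommGroup E]
    [InnerProductSpace ℝ E] (ψ : HilbertBasis ι ℝ E) {A : E →ₗ[ℝ] E} (hA : A.IsSymmetric)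
    {lam : ι → ℝ} (hlam : ∀ j, 0 ≤ lam j) (heig : ∀ j, A (ψ j) = lam j ^ 2 • ψ j)
    {M : ℕ} {ω Δt δ : ℝ} (hω : 0 < ω) (hΔt : 0 < Δt) (hT : 2 * π / ω = M * Δt)
    (hδ : ∀ j, δ ≤ |lam j - ω| / ω) (hCFL : ∀ j, lam j * Δt ≤ 2) (hsmall : ω * Δt ≤ min δ 1)
    {f ν : E} (hν : (sin (ω * Δt / 2) / (Δt / 2)) ^ 2 • ν - A ν = ω • f)
    {u : ℕ → E} (hu : IsLeapfrog A ω Δt f u) :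
    ‖waveHoltzFilter M ω Δt u - ν‖ ≤ max (1 - 0.3 * δ ^ 2) 0.63 * ‖u 0 - ν‖ := by
  obtain ⟨hωδ, hω₁⟩ := le_min_iff.1 hsmall
  refine norm_le_mul_norm_of_forall_norm_inner_le ψ (le_max_of_le_right (by norm_num)) fun j => ?_
  have hmode : ∀ v, innerₗ E (ψ j) (A v) = lam j ^ 2 * innerₗ E (ψ j) v := by
    intro v
    rw [innerₗ_apply_apply, ← hA, heig, real_inner_smul_left, innerₗ_apply_apply]
  set x := arcsin (lam j * Δt / 2)
  have hlamΔt : 0 ≤ lam j * Δt := mul_nonneg (hlam j) hΔt.le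
  have hsin : sin x = lam j * Δt / 2 := sin_arcsin (by linarith) (by linarith [hCFL j])
  have hcos : Δt ^ 2 * lam j ^ 2 = 2 - 2 * cos (2 * x) := by
    rw [cos_two_mul, cos_sq', hsin]
    ring
  have hgap : |sin x - ω * Δt / 2| / (ω * Δt / 2) = |lam j - ω| / ω := by
    rw [hsin, show lam j * Δt / 2 - ω * Δt / 2 = (lam j - ω) * (Δt / 2) by ring, abs_mul,
      abs_of_pos (half_pos hΔt), mul_div_assoc ω, mul_div_mul_right _ _ (half_pos hΔt).ne']
  rw [← innerₗ_apply_apply, hu.map_waveHoltzFilter_sub hω hΔt hω₁ hT hν hmode hcos, norm_mul]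
  refine mul_le_mul_of_nonneg_right ?_ (norm_nonneg _)
  exact abs_filterSymbol_le (natCast_mul_half_angle_eq_pi hω.ne' hT) (by linarith)
    (arcsin_nonneg.2 (by linarith)) (arcsin_le_pi_div_two _) (by linarith) (hgap ▸ hδ j)

theorem mul_le_two_of_le_two_div {l L c Δt : ℝ} (hl : 0 ≤ l) (hlL : l ≤ L) (hc : 0 < c)
    (hΔt : Δt ≤ 2 / (L + c)) : l * Δt ≤ 2 := by
  have hLc : 0 < L + c := by linarith
  calc l * Δt ≤ (L + c) * (2 / (L + c)) := by
        refine (mul_le_mul_of_nonneg_left hΔt hl).trans ?_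
        gcongr
        linarith
    _ = 2 := mul_div_cancel₀ _ hLc.ne'

theorem em_waveholtz_discrete_convergence_general {ι E : Type*} [NormedAddCommGroup E]
    [InnerProductSpace ℝ E] (ψ : HilbertBasis ι ℝ E) (A : E →ₗ[ℝ] E) (hA : A.IsSymmetric)
    (lam : ι → ℝ) (hlam : ∀ j, 0 ≤ lam j) (heig : ∀ j, A (ψ j) = lam j ^ 2 • ψ j)
    (ω : ℝ) (hω : 0 < ω) (δ : ℝ) (hδ : ∀ j, δ ≤ |lam j - ω| / ω)
    (Δt : ℝ) (M : ℕ) (hT : 2 * π / ω = M * Δt) (hCFL : ∀ j, lam j * Δt ≤ 2)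
    (hsmall : ω * Δt ≤ min δ 1) (f νinf : E)
    (hνinf : (sin (ω * Δt / 2) / (Δt / 2)) ^ 2 • νinf - A νinf = ω • f)
    (u : E → ℕ → E) (hu₀ : ∀ ν, u ν 0 = ν) (hu : ∀ ν, IsLeapfrog A ω Δt f (u ν))
    (νseq : ℕ → E) (hν₀ : νseq 0 = 0)
    (hνrec : ∀ k, νseq (k + 1) = waveHoltzFilter M ω Δt (u (νseq k))) :
    (∀ k, ‖νseq k - νinf‖ ≤ max (1 - 0.3 * δ ^ 2) 0.63 ^ k * ‖νinf‖) ∧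
      Tendsto νseq atTop (nhds νinf) := by
  have hΔt : 0 < Δt := pos_of_mul_pos_right (hT ▸ by positivity : 0 < M * Δt) M.cast_nonneg
  have hδ₀ : 0 < δ := (mul_pos hω hΔt).trans_le (hsmall.trans (min_le_left _ _))
  have hcontraction : ∀ k, ‖νseq (k + 1) - νinf‖
      ≤ max (1 - 0.3 * δ ^ 2) 0.63 * ‖νseq k - νinf‖ := by
    intro k
    simpa only [hνrec, hu₀] using (hu (νseq k)).norm_waveHoltzFilter_sub_le ψ hA hlam heig hω hΔt
      hT hδ hCFL hsmall hνinf
  have hrate : max (1 - 0.3 * δ ^ 2) 0.63 < 1 :=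
    max_lt (sub_lt_self _ (by positivity)) (by norm_num)
  simpa only [hν₀, zero_sub, norm_neg] using
    norm_sub_le_and_tendsto_of_contraction (le_max_of_le_right (by norm_num)) hrate hcontraction

end Convergence

/-- Convergence of the discrete Yee-EM-WaveHoltz iteration (Theorem 1),
stated in diagonalizable matrix form. -/
theorem em_waveholtz_discrete_convergence
    (N : ℕ) (hN : 0 < N)
    (A : Matrix (Fin N) (Fin N) ℝ) (hA : A.IsSymm)
    (lam : Fin N → ℝ) (hlam_pos : ∀ j, 0 < lam j) (hlam_mono : StrictMono lam)
    (ψ : Fin N → EuclideanSpace ℝ (Fin N)) (hψ : Orthonormal ℝ ψ)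
    (heig : ∀ j, Matrix.toEuclideanLin A (ψ j) = (lam j) ^ 2 • ψ j)
    (ω : ℝ) (hω : 0 < ω)
    (δh : ℝ) (hδh_le : ∀ j, δh ≤ |lam j - ω| / ω)
    (hδh_mem : ∃ j, δh = |lam j - ω| / ω) (hδh_pos : 0 < δh)
    (Δt : ℝ) (hΔt : 0 < Δt)
    (M : ℕ) (hM : 0 < M) (hT : 2 * π / ω = (M : ℝ) * Δt)
    (hCFL : Δt ≤ 2 / (lam ⟨N - 1, Nat.sub_lt hN one_pos⟩ + 2 * ω / π))
    (hsmall : ω * Δt ≤ min δh 1)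
    (ωt : ℝ) (hωt : ωt = Real.sin (ω * Δt / 2) / (Δt / 2))
    (f : EuclideanSpace ℝ (Fin N))
    (νinf : EuclideanSpace ℝ (Fin N))
    (hνinf : ωt ^ 2 • νinf - Matrix.toEuclideanLin A νinf = ω • f)
    -- the leapfrog sequence with initial data ν
    (u : EuclideanSpace ℝ (Fin N) → ℕ → EuclideanSpace ℝ (Fin N))
    (hu0 : ∀ ν, u ν 0 = ν)
    (hu1 : ∀ ν, u ν 1 = ν - (Δt ^ 2 / 2) • (Matrix.toEuclideanLin A ν + ω • f))
    (hurec : ∀ ν, ∀ n, 1 ≤ n → u ν (n + 1) =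
      (2 : ℝ) • u ν n - u ν (n - 1) - Δt ^ 2 • Matrix.toEuclideanLin A (u ν n)
        - (Δt ^ 2 * ω * Real.cos (ω * n * Δt)) • f)
    -- the discrete filter
    (Ph : EuclideanSpace ℝ (Fin N) → EuclideanSpace ℝ (Fin N))
    (hPh : ∀ ν, Ph ν = (2 * Δt / (2 * π / ω)) •
      ∑ n ∈ Finset.range (M + 1),
        ((if n = 0 ∨ n = M then (1 / 2 : ℝ) else 1) *
          (Real.cos (ω * n * Δt) - 1 / 4)) • u ν n)
    -- the WaveHoltz iteration
    (νseq : ℕ → EuclideanSpace ℝ (Fin N))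
    (hν0 : νseq 0 = 0) (hνrec : ∀ k, νseq (k + 1) = Ph (νseq k))
    (ρh : ℝ) (hρh : ρh = max (1 - 0.3 * δh ^ 2) 0.63) :
    (∀ k, ‖νseq k - νinf‖ ≤ ρh ^ k * ‖νinf‖) ∧
      Tendsto νseq atTop (nhds νinf) := by
  subst hωt hρh
  have hdense : ⊤ ≤ (Submodule.span ℝ (Set.range ψ)).topologicalClosure := by
    rw [hψ.linearIndependent.span_eq_top_of_card_eq_finrank' (by simp)]
    exact Submodule.le_topologicalClosure _
  exact em_waveholtz_discrete_convergence_general (HilbertBasis.mk hψ hdense) _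
    (Matrix.isSymmetric_toEuclideanLin_iff.2 (Matrix.isHermitian_iff_isSymm.2 hA)) lam
    (fun j => (hlam_pos j).le) (by simpa using heig) ω hω δh hδh_le Δt M hT
    (fun j => mul_le_two_of_le_two_div (hlam_pos j).le
      (hlam_mono.monotone (Fin.mk_le_mk.2 (Nat.le_sub_one_of_lt j.2))) (by positivity) hCFL)
    hsmall f νinf hνinf u hu0 (fun ν => ⟨by rw [hu1, hu0], fun n => hurec ν (n + 1) n.succ_pos⟩)
    νseq hν0 (fun k => (hνrec k).trans (hPh _))
end

section
/- Let ω > 0 and T := 2π/ω, and define the filter transfer function β(λ) := (2/T) ∫_0^T (cos(ω t) − 1/4) cos(λ t) dt for λ ≥ 0. Then β(0) = −1/2, and for every λ > 0 with λ ≠ ω one has |β(λ)| < 1. -/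
open Real MeasureTheory intervalIntegral

/-!
Integrating over a full period expresses the transfer function through the cardinal sine: with
`r = λ / ω`, `β(λ) = sinc (2π(1 + r)) + sinc (2π(1 - r)) - sinc (2πr) / 2`. Since
`x * sinc x = sin x` and `sin` is `2π`-periodic, the three terms are rational multiples of each
other, so `β` is a rational function of `r` times any one of them. Near `r = 0` and near `r = 1`
the term with the smallest argument is the one to factor out, and the parabola
`sinc (2πu) ≤ 1 - 2u²`, valid for `|u| ≤ 1/2`, beats the rational factor. For `|r| ≥ 3/2` all
three arguments are at least `π` in absolute value, and `|sinc x| ≤ 1 / |x|` suffices.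
-/

lemma mul_sinc (x : ℝ) : x * sinc x = sin x := by
  rcases eq_or_ne x 0 with rfl | hx
  · simp
  · rw [sinc_of_ne_zero hx, mul_div_cancel₀ _ hx]

lemma abs_sinc_le_inv_abs {x : ℝ} (hx : x ≠ 0) : |sinc x| ≤ |x|⁻¹ := by
  rw [sinc_of_ne_zero hx, abs_div, div_eq_mul_inv]
  exact mul_le_of_le_one_left (by positivity) (abs_sin_le_one x)

lemma sinc_nonneg_of_abs_le_pi {x : ℝ} (hx : |x| ≤ π) : 0 ≤ sinc x := by
  wlog hx₀ : 0 ≤ x generalizing x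
  · simpa only [sinc_neg] using this (x := -x) (by rwa [abs_neg]) (by linarith)
  rcases hx₀.eq_or_lt with rfl | hx_pos
  · simp
  · rw [sinc_of_ne_zero hx_pos.ne']
    exact div_nonneg (sin_nonneg_of_nonneg_of_le_pi hx₀ (le_of_abs_le hx)) hx₀

lemma sinc_two_mul (x : ℝ) : sinc (2 * x) = sinc x * cos x := by
  rcases eq_or_ne x 0 with rfl | hx
  · simp
  · rw [sinc_of_ne_zero hx, sinc_of_ne_zero (by positivity), sin_two_mul]
    field_simp

lemma sinc_two_pi_mul_nonneg {u : ℝ} (hu : |u| ≤ 1 / 2) : 0 ≤ sinc (2 * π * u) := by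
  refine sinc_nonneg_of_abs_le_pi ?_
  rw [abs_mul, abs_of_pos two_pi_pos]
  nlinarith [pi_pos]

lemma sinc_two_pi_mul_le {u : ℝ} (hu : |u| ≤ 1 / 2) : sinc (2 * π * u) ≤ 1 - 2 * u ^ 2 := by
  have hπu : |π * u| ≤ π / 2 := by
    rw [abs_mul, abs_of_pos pi_pos]
    nlinarith [pi_pos]
  have hcos : 0 ≤ cos (π * u) :=
    cos_nonneg_of_neg_pi_div_two_le_of_le (neg_le_of_abs_le hπu) (le_of_abs_le hπu)
  calc sinc (2 * π * u)
      = sinc (π * u) * cos (π * u) := by rw [mul_assoc, sinc_two_mul]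
    _ ≤ cos (π * u) := mul_le_of_le_one_left hcos (sinc_le_one _)
    _ ≤ 1 - 2 / π ^ 2 * (π * u) ^ 2 :=
        cos_le_one_sub_mul_cos_sq (hπu.trans (half_le_self pi_pos.le))
    _ = 1 - 2 * u ^ 2 := by field_simp

lemma abs_sinc_two_pi_mul_le {u : ℝ} (hu : 1 / 2 ≤ |u|) : |sinc (2 * π * u)| ≤ π⁻¹ := by
  have hπ : π ≤ |2 * π * u| := by
    rw [abs_mul, abs_of_pos two_pi_pos]
    nlinarith [pi_pos]
  have hne : 2 * π * u ≠ 0 := abs_pos.mp (pi_pos.trans_le hπ)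
  exact (abs_sinc_le_inv_abs hne).trans (inv_anti₀ pi_pos hπ)

lemma add_int_mul_sinc_two_pi_mul (n : ℤ) (r : ℝ) :
    (r + n) * sinc (2 * π * (r + n)) = r * sinc (2 * π * r) := by
  have hsin : sin (2 * π * (r + n)) = sin (2 * π * r) := by
    rw [show 2 * π * (r + n) = 2 * π * r + n * (2 * π) by ring, sin_add_int_mul_two_pi]
  rw [← mul_sinc, ← mul_sinc (2 * π * r)] at hsin
  exact mul_left_cancel₀ two_pi_pos.ne' (by linarith)

lemma one_add_mul_sinc_two_pi_mul (r : ℝ) :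
    (1 + r) * sinc (2 * π * (1 + r)) = r * sinc (2 * π * r) := by
  simpa [add_comm] using add_int_mul_sinc_two_pi_mul 1 r

lemma one_sub_mul_sinc_two_pi_mul (r : ℝ) :
    (1 - r) * sinc (2 * π * (1 - r)) = -(r * sinc (2 * π * r)) := by
  simpa [neg_add_eq_sub] using add_int_mul_sinc_two_pi_mul 1 (-r)

lemma integral_cos_mul (c T : ℝ) : ∫ t in (0 : ℝ)..T, cos (c * t) = T * sinc (c * T) := by
  rcases eq_or_ne c 0 with rfl | hc
  · simp
  · refine mul_left_cancel₀ hc ?_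
    rw [mul_integral_comp_mul_left, integral_cos, mul_zero, sin_zero, sub_zero, ← mul_sinc]
    ring

lemma integral_cos_sub_const_mul_cos (a b c T : ℝ) :
    ∫ t in (0 : ℝ)..T, (cos (a * t) - c) * cos (b * t) =
      T * ((sinc ((a + b) * T) + sinc ((a - b) * T)) / 2 - c * sinc (b * T)) := by
  have product_to_sum (t : ℝ) : (cos (a * t) - c) * cos (b * t) =
      (cos ((a + b) * t) + cos ((a - b) * t)) / 2 - c * cos (b * t) := by
    rw [add_mul, sub_mul, sub_mul, cos_add, cos_sub]
    ring
  have integrable (k : ℝ) : IntervalIntegrable (fun t ↦ cos (k * t)) volume 0 T :=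
    Continuous.intervalIntegrable (by fun_prop) 0 T
  simp only [product_to_sum]
  rw [integral_sub (((integrable _).add (integrable _)).div_const 2) ((integrable b).const_mul c),
    intervalIntegral.integral_div, integral_add (integrable _) (integrable _),
    intervalIntegral.integral_const_mul]
  simp only [integral_cos_mul]
  ring

/-- The WaveHoltz transfer function in the dimensionless frequency `r = λ / ω`: the value `β(λ)`
of the filter over one period `2π / ω`, written with `sinc` so that no frequency, in particular
neither `0` nor `±ω`, needs separate treatment. -/
noncomputable def waveHoltzTransfer (r : ℝ) : ℝ :=
  sinc (2 * π * (1 + r)) + sinc (2 * π * (1 - r)) - sinc (2 * π * r) / 2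

namespace waveHoltzTransfer

lemma integral_eq {ω : ℝ} (hω : ω ≠ 0) (lam : ℝ) :
    2 / (2 * π / ω) * ∫ t in (0 : ℝ)..2 * π / ω, (cos (ω * t) - 1 / 4) * cos (lam * t) =
      waveHoltzTransfer (lam / ω) := by
  have hadd : (ω + lam) * (2 * π / ω) = 2 * π * (1 + lam / ω) := by field_simp
  have hsub : (ω - lam) * (2 * π / ω) = 2 * π * (1 - lam / ω) := by field_simp
  have hlam : lam * (2 * π / ω) = 2 * π * (lam / ω) := by ring
  rw [integral_cos_sub_const_mul_cos, hadd, hsub, hlam, waveHoltzTransfer]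
  field_simp
  ring

protected lemma neg (r : ℝ) : waveHoltzTransfer (-r) = waveHoltzTransfer r := by
  simp only [waveHoltzTransfer, mul_neg, sinc_neg, sub_neg_eq_add, ← sub_eq_add_neg]
  ring

lemma mul_eq_neg_mul_sinc (r : ℝ) :
    2 * (1 - r ^ 2) * waveHoltzTransfer r = -((1 + 3 * r ^ 2) * sinc (2 * π * r)) := by
  unfold waveHoltzTransfer
  linear_combination
    2 * (1 - r) * one_add_mul_sinc_two_pi_mul r + 2 * (1 + r) * one_sub_mul_sinc_two_pi_mul r

lemma mul_eq_mul_sinc_one_sub (r : ℝ) :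
    2 * r * (1 + r) * waveHoltzTransfer r = (1 + 3 * r ^ 2) * sinc (2 * π * (1 - r)) := by
  unfold waveHoltzTransfer
  linear_combination 2 * r * one_add_mul_sinc_two_pi_mul r - (1 - r) * one_sub_mul_sinc_two_pi_mul r

protected lemma zero : waveHoltzTransfer 0 = -(1 / 2) := by
  have h : 2 * waveHoltzTransfer 0 = -1 := by simpa using mul_eq_neg_mul_sinc 0
  linarith

protected lemma one : waveHoltzTransfer 1 = 1 := by
  have h : 2 * (1 + 1) * waveHoltzTransfer 1 = 1 + 3 := by simpa using mul_eq_mul_sinc_one_sub 1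
  linarith

lemma abs_lt_one_of_abs_le_half {r : ℝ} (hr : |r| ≤ 1 / 2) : |waveHoltzTransfer r| < 1 := by
  have hr_sq : r ^ 2 ≤ 1 / 4 := by nlinarith [sq_abs r, abs_nonneg r]
  have hsinc_nonneg := sinc_two_pi_mul_nonneg hr
  have hpos : 0 < 2 * (1 - r ^ 2) := by linarith
  refine lt_of_mul_lt_mul_left ?_ hpos.le
  calc 2 * (1 - r ^ 2) * |waveHoltzTransfer r|
      = |2 * (1 - r ^ 2) * waveHoltzTransfer r| := by rw [abs_mul, abs_of_pos hpos]
    _ = (1 + 3 * r ^ 2) * sinc (2 * π * r) := by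
        rw [mul_eq_neg_mul_sinc, abs_neg, abs_of_nonneg (by positivity)]
    _ ≤ (1 + 3 * r ^ 2) * (1 - 2 * r ^ 2) := by gcongr; exact sinc_two_pi_mul_le hr
    _ < 2 * (1 - r ^ 2) * 1 := by nlinarith [sq_nonneg (r ^ 2 - 1 / 4)]

lemma abs_lt_one_of_abs_one_sub_le_half {r : ℝ} (hr : |1 - r| ≤ 1 / 2) (hr₁ : r ≠ 1) :
    |waveHoltzTransfer r| < 1 := by
  have hr_half : 1 / 2 ≤ r := by linarith [le_of_abs_le hr]
  have hsinc_nonneg := sinc_two_pi_mul_nonneg hr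
  have hdist : 0 < (1 - r) ^ 2 := sq_pos_of_ne_zero (sub_ne_zero.mpr hr₁.symm)
  have hpos : 0 < 2 * r * (1 + r) := by positivity
  refine lt_of_mul_lt_mul_left ?_ hpos.le
  calc 2 * r * (1 + r) * |waveHoltzTransfer r|
      = |2 * r * (1 + r) * waveHoltzTransfer r| := by rw [abs_mul, abs_of_pos hpos]
    _ = (1 + 3 * r ^ 2) * sinc (2 * π * (1 - r)) := by
        rw [mul_eq_mul_sinc_one_sub, abs_of_nonneg (by positivity)]
    _ ≤ (1 + 3 * r ^ 2) * (1 - 2 * (1 - r) ^ 2) := by gcongr; exact sinc_two_pi_mul_le hr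
    _ = 2 * r * (1 + r) * 1 - (1 - r) ^ 2 * (1 + 6 * r ^ 2) := by ring
    _ < 2 * r * (1 + r) * 1 := sub_lt_self _ (mul_pos hdist (by positivity))

lemma abs_lt_one_of_three_halves_le_abs {r : ℝ} (hr : 3 / 2 ≤ |r|) :
    |waveHoltzTransfer r| < 1 := by
  have hadd : 1 / 2 ≤ |1 + r| := by
    have := abs_sub_abs_le_abs_sub r (-1)
    rw [abs_neg, abs_one, sub_neg_eq_add, add_comm r] at this
    linarith
  have hsub : 1 / 2 ≤ |1 - r| := by
    have := abs_sub_abs_le_abs_sub r 1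
    rw [abs_one, abs_sub_comm] at this
    linarith
  calc |waveHoltzTransfer r|
      ≤ |sinc (2 * π * (1 + r))| + |sinc (2 * π * (1 - r))| + |sinc (2 * π * r) / 2| :=
        (abs_sub _ _).trans (add_le_add_left (abs_add_le _ _) _)
    _ ≤ π⁻¹ + π⁻¹ + π⁻¹ / 2 := by
        rw [abs_div, abs_two]
        gcongr
        · exact abs_sinc_two_pi_mul_le hadd
        · exact abs_sinc_two_pi_mul_le hsub
        · exact abs_sinc_two_pi_mul_le (by linarith)
    _ = 5 / 2 * π⁻¹ := by ring
    _ < 1 := by rw [← div_eq_mul_inv, div_lt_one pi_pos]; linarith [pi_gt_three]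

lemma abs_lt_one {r : ℝ} (hr : |r| ≠ 1) : |waveHoltzTransfer r| < 1 := by
  wlog hr₀ : 0 ≤ r generalizing r
  · simpa only [waveHoltzTransfer.neg] using this (r := -r) (by rwa [abs_neg]) (by linarith)
  have habs : |r| = r := abs_of_nonneg hr₀
  rcases le_total r (1 / 2) with hlow | hlow
  · exact abs_lt_one_of_abs_le_half (habs.trans_le hlow)
  rcases le_total r (3 / 2) with hhigh | hhigh
  · have hnear : |1 - r| ≤ 1 / 2 := abs_le.mpr ⟨by linarith, by linarith⟩
    exact abs_lt_one_of_abs_one_sub_le_half hnear (habs ▸ hr)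
  · exact abs_lt_one_of_three_halves_le_abs (hhigh.trans_eq habs.symm)

lemma eq_one_of_abs_eq_one {r : ℝ} (hr : |r| = 1) : waveHoltzTransfer r = 1 := by
  rcases eq_or_eq_neg_of_abs_eq hr with rfl | rfl
  · exact waveHoltzTransfer.one
  · rw [waveHoltzTransfer.neg, waveHoltzTransfer.one]

lemma abs_lt_one_iff {r : ℝ} : |waveHoltzTransfer r| < 1 ↔ |r| ≠ 1 := by
  refine ⟨fun hlt hr ↦ ?_, abs_lt_one⟩
  simp [eq_one_of_abs_eq_one hr] at hlt

end waveHoltzTransfer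

theorem filter_transfer_contraction_general
    {ω : ℝ} (hω : ω ≠ 0) {T : ℝ} (hT : T = 2 * π / ω) {β : ℝ → ℝ}
    (hβ : ∀ lam, β lam =
      (2 / T) * ∫ t in (0 : ℝ)..T, (Real.cos (ω * t) - 1 / 4) * Real.cos (lam * t)) :
    β 0 = -(1 / 2) ∧ ∀ lam : ℝ, |β lam| < 1 ↔ |lam| ≠ |ω| := by
  have hβ_eq (lam : ℝ) : β lam = waveHoltzTransfer (lam / ω) := by
    rw [hβ, hT, waveHoltzTransfer.integral_eq hω]
  refine ⟨by rw [hβ_eq, zero_div, waveHoltzTransfer.zero], fun lam ↦ ?_⟩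
  rw [hβ_eq, waveHoltzTransfer.abs_lt_one_iff, abs_div, Ne, div_eq_one_iff_eq (abs_ne_zero.mpr hω)]

/-- The WaveHoltz filter transfer function satisfies `β(0) = -1/2` and is a
strict contraction factor, `|β(λ)| < 1`, on every nonresonant mode `λ ≠ ω`. -/
theorem filter_transfer_contraction
    (ω : ℝ) (hω : 0 < ω) (T : ℝ) (hT : T = 2 * π / ω)
    (β : ℝ → ℝ)
    (hβ : ∀ lam, β lam =
      (2 / T) * ∫ t in (0 : ℝ)..T, (Real.cos (ω * t) - 1 / 4) * Real.cos (lam * t)) :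
    β 0 = -(1 / 2) ∧ ∀ lam : ℝ, 0 < lam → lam ≠ ω → |β lam| < 1 := by
  obtain ⟨hzero, hcontract⟩ := filter_transfer_contraction_general hω.ne' hT hβ
  exact ⟨hzero, fun lam hlam hne ↦ (hcontract lam).mpr (by rwa [abs_of_pos hlam, abs_of_pos hω])⟩
end

section
/- Let λ > 0, ω > 0 with λ ≠ ω, and Δt > 0 with λ Δt < 2 and ω Δt < 2, and let f, ν ∈ ℝ. Define λ̃ := (2/Δt) arcsin(λ Δt/2) and ω̄ := (2/Δt) arcsin(ω Δt/2), and set ν^∞ := ω f / (ω² − λ²). Define the sequence (u^n) by u^0 = ν, u^1 = (1 − λ² Δt²/2) ν − (ω Δt²/2) f, and u^{n+1} = 2 u^n − u^{n−1} − Δt² λ² u^n − Δt² ω cos(ω̄ n Δt) f for n ≥ 1. Then for every n ≥ 0, u^n = (ν − ν^∞) cos(λ̃ n Δt) + ν^∞ cos(ω̄ n Δt). -/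
open Real

/-!
With `c = cos (λ̃ Δt) = 1 - (λ Δt)² / 2` and `d = cos (ω̄ Δt) = 1 - (ω Δt)² / 2`, the unforced
scheme is the Chebyshev recurrence `w (n + 2) = 2 c w (n + 1) - w n`, solved from `w 1 = c w 0` by
`w 0 * T_n(c) = w 0 * cos (λ̃ n Δt)`. The forcing is proportional to `T_n(d) = cos (ω̄ n Δt)`,
which satisfies the same recurrence with `d` in place of `c`, so a multiple of `T_n(d)` is a
particular solution; its amplitude `a` is fixed by `2 (c - d) a = Δt² ω f`, that is,
`a = ω f / (ω² - λ²)`.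
-/

open Polynomial

section Chebyshev

variable {R : Type*} [CommRing R] {c d a : R} {u : ℕ → R}

theorem eval_chebyshevT_natCast_add_two (x : R) (n : ℕ) :
    (Chebyshev.T R (n + 2 : ℕ)).eval x =
      2 * x * (Chebyshev.T R (n + 1 : ℕ)).eval x - (Chebyshev.T R n).eval x := by
  simp [Chebyshev.T_add_two]

theorem eq_mul_eval_chebyshevT_of_recurrence (h₁ : u 1 = c * u 0)
    (hrec : ∀ n, u (n + 2) = 2 * c * u (n + 1) - u n) (n : ℕ) :
    u n = u 0 * (Chebyshev.T R n).eval c := by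
  induction n using Nat.twoStepInduction with
  | zero => simp
  | one => simp [h₁, mul_comm]
  | more n ih ih' =>
    rw [hrec, ih, ih', eval_chebyshevT_natCast_add_two]
    ring

theorem eq_add_eval_chebyshevT_of_forced_recurrence (h₁ : u 1 = c * u 0 - (c - d) * a)
    (hrec : ∀ n : ℕ, u (n + 2) =
      2 * c * u (n + 1) - u n - 2 * (c - d) * a * (Chebyshev.T R (n + 1 : ℕ)).eval d) (n : ℕ) :
    u n = (u 0 - a) * (Chebyshev.T R n).eval c + a * (Chebyshev.T R n).eval d := by
  let w (n : ℕ) : R := u n - a * (Chebyshev.T R n).eval d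
  have hw₁ : w 1 = c * w 0 := by
    simp only [w, h₁, Nat.cast_one, Nat.cast_zero, Chebyshev.T_one, Chebyshev.T_zero, eval_X,
      eval_one]
    ring
  have hwrec (n : ℕ) : w (n + 2) = 2 * c * w (n + 1) - w n := by
    simp only [w, hrec, eval_chebyshevT_natCast_add_two]
    ring
  have hw := eq_mul_eval_chebyshevT_of_recurrence hw₁ hwrec n
  simp only [w, Nat.cast_zero, Chebyshev.T_zero, eval_one] at hw
  linear_combination hw

end Chebyshev

section DiscreteFrequency

/-- The frequency `ω̃` with `sin (ω̃ Δt / 2) / (Δt / 2) = ω`, at which a leapfrog scheme of time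
step `Δt` oscillates when the continuous mode has frequency `ω`. The formula has this meaning only
for `Δt ≠ 0` and `|ω Δt| ≤ 2`.
Both `λ̃` and the modified forcing frequency `ω̄` are of this form. -/
noncomputable def discreteFrequency (Δt ω : ℝ) : ℝ :=
  2 / Δt * arcsin (ω * Δt / 2)

variable {Δt ω : ℝ}

theorem sin_discreteFrequency_mul_div_two (hΔt : Δt ≠ 0) (hcfl : |ω * Δt| ≤ 2) :
    sin (discreteFrequency Δt ω * Δt / 2) = ω * Δt / 2 := by
  have hangle : discreteFrequency Δt ω * Δt / 2 = arcsin (ω * Δt / 2) := by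
    unfold discreteFrequency
    field_simp
  obtain ⟨hlower, hupper⟩ := abs_le.mp hcfl
  rw [hangle, sin_arcsin (by linarith) (by linarith)]

theorem cos_discreteFrequency_mul (hΔt : Δt ≠ 0) (hcfl : |ω * Δt| ≤ 2) :
    cos (discreteFrequency Δt ω * Δt) = 1 - (ω * Δt) ^ 2 / 2 :=
  calc cos (discreteFrequency Δt ω * Δt)
    _ = cos (2 * (discreteFrequency Δt ω * Δt / 2)) := by ring_nf
    _ = 1 - 2 * sin (discreteFrequency Δt ω * Δt / 2) ^ 2 := by rw [cos_two_mul, cos_sq']; ring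
    _ = 1 - (ω * Δt) ^ 2 / 2 := by rw [sin_discreteFrequency_mul_div_two hΔt hcfl]; ring

theorem cos_discreteFrequency_mul_natCast_mul (hΔt : Δt ≠ 0) (hcfl : |ω * Δt| ≤ 2) (n : ℕ) :
    cos (discreteFrequency Δt ω * n * Δt) =
      (Chebyshev.T ℝ n).eval (1 - (ω * Δt) ^ 2 / 2) := by
  rw [← cos_discreteFrequency_mul hΔt hcfl, Chebyshev.T_real_cos, Int.cast_natCast]
  congr 1
  ring

end DiscreteFrequency

/-- Elimination of the temporal error: driving the leapfrog scheme with the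
modified frequency `ω̄ = (2/Δt) arcsin(ω Δt/2)` makes the steady component of
the discrete mode equal to the exact frequency-domain coefficient
`ν^∞ = ω f/(ω² - λ²)`. -/
theorem leapfrog_mode_modified_forcing
    (lam ω : ℝ) (hlam : 0 < lam) (hω : 0 < ω) (hne : lam ≠ ω)
    (Δt : ℝ) (hΔt : 0 < Δt) (hcfl1 : lam * Δt < 2) (hcfl2 : ω * Δt < 2)
    (f ν : ℝ)
    (lamt : ℝ) (hlamt : lamt = (2 / Δt) * Real.arcsin (lam * Δt / 2))
    (ωbar : ℝ) (hωbar : ωbar = (2 / Δt) * Real.arcsin (ω * Δt / 2))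
    (νinf : ℝ) (hνinf : νinf = ω * f / (ω ^ 2 - lam ^ 2))
    (u : ℕ → ℝ)
    (hu0 : u 0 = ν)
    (hu1 : u 1 = (1 - lam ^ 2 * Δt ^ 2 / 2) * ν - (ω * Δt ^ 2 / 2) * f)
    (hurec : ∀ n, 1 ≤ n → u (n + 1) =
      2 * u n - u (n - 1) - Δt ^ 2 * lam ^ 2 * u n
        - Δt ^ 2 * ω * Real.cos (ωbar * n * Δt) * f) :
    ∀ n : ℕ, u n = (ν - νinf) * Real.cos (lamt * n * Δt)
      + νinf * Real.cos (ωbar * n * Δt) := by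
  have hcos_lam := cos_discreteFrequency_mul_natCast_mul hΔt.ne'
    ((abs_of_pos (mul_pos hlam hΔt)).trans_le hcfl1.le)
  have hcos_ω := cos_discreteFrequency_mul_natCast_mul hΔt.ne'
    ((abs_of_pos (mul_pos hω hΔt)).trans_le hcfl2.le)
  obtain rfl : lamt = discreteFrequency Δt lam := hlamt
  obtain rfl : ωbar = discreteFrequency Δt ω := hωbar
  have hsq : ω ^ 2 - lam ^ 2 ≠ 0 :=
    sub_ne_zero.mpr fun h ↦ hne ((sq_eq_sq₀ hω.le hlam.le).mp h).symm
  have hamplitude : νinf * (ω ^ 2 - lam ^ 2) = ω * f := (eq_div_iff hsq).mp hνinf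
  intro n
  rw [hcos_lam, hcos_ω, ← hu0]
  refine eq_add_eval_chebyshevT_of_forced_recurrence ?_ (fun k ↦ ?_) n
  · rw [hu1, hu0]
    linear_combination (Δt ^ 2 / 2) * hamplitude
  · rw [hurec (k + 1) k.succ_pos, hcos_ω, Nat.add_sub_cancel]
    linear_combination
      (Δt ^ 2 * (Chebyshev.T ℝ (k + 1 : ℕ)).eval (1 - (ω * Δt) ^ 2 / 2)) * hamplitude
end
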